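/- Let q, a be complex numbers such that q^m ≠ 1, a q^m ≠ 1, and a^3 q^{3m} ≠ 1 for all m ≥ 1 (so that all denominators below are nonzero). Suppose (α_n, β_n) is a Bailey pair with parameters (a, q). Define α'_r = a^r q^{r^2} α_r and β'_n = (1/(a^3 q^3;q^3)_{2n}) · ∑_{k=0}^{n} [(aq;q)_{3n-k} a^k q^{k^2} / (q^3;q^3)_{n-k}] · β_k. Then (α'_n, β'_n) is a Bailey pair with parameters (a^3, q^3). -/

import Mathlib

/-!
Substituting the definition of `β` into that of `β'` and interchanging the two sums, the claim
becomes one finite identity for the coefficient of each `α r`. With `A = a q^(2r)` it reads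
`∑_{i+j=N} (A q^(j+1);q)_{3i+j} A^j q^(j²) / ((q³;q³)_i (q;q)_j) = (A³ q^(3N+3);q³)_N / (q³;q³)_N`.
Call the left side `S_N(A)`. Each of its terms, multiplied by `1 - q^(3N)`, splits in the manner of
Pascal's rule into multiples of two neighbouring terms of `S_{N-1}(A q²)`. The two multiples in
which a given term of `S_{N-1}(A q²)` occurs add up to `1 - A³ q^(3N+3)`, independently of the term,
which yields a first-order recurrence for `S_N(A)`.
-/

/-- The finite q-Pochhammer symbol `(x;q)_n = ∏_{j=0}^{n-1} (1 - x q^j)`. -/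
noncomputable def qPoch (x q : ℂ) (n : ℕ) : ℂ := ∏ j ∈ Finset.range n, (1 - x * q ^ j)

/-- `(α, β)` is a Bailey pair with parameters `(a, q)`. -/
def IsBaileyPair (a q : ℂ) (α β : ℕ → ℂ) : Prop :=
  ∀ n : ℕ, β n = ∑ r ∈ Finset.range (n + 1), α r / (qPoch q q (n - r) * qPoch (a * q) q (n + r))

open Finset

section qPoch

variable {a q : ℂ}

@[simp]
lemma qPoch_zero (x q : ℂ) : qPoch x q 0 = 1 := prod_range_zero _

lemma qPoch_add (x q : ℂ) (m n : ℕ) :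
    qPoch x q (m + n) = qPoch x q m * qPoch (x * q ^ m) q n := by
  simp only [qPoch, prod_range_add, pow_add, mul_assoc]

lemma qPoch_succ (x q : ℂ) (n : ℕ) : qPoch x q (n + 1) = qPoch x q n * (1 - x * q ^ n) :=
  prod_range_succ _ _

lemma qPoch_succ' (x q : ℂ) (n : ℕ) : qPoch x q (n + 1) = (1 - x) * qPoch (x * q) q n := by
  rw [add_comm, qPoch_add, qPoch_succ, qPoch_zero, pow_zero, pow_one, one_mul, mul_one]

lemma qPoch_mul_pow_succ (x q : ℂ) (m n : ℕ) :
    qPoch (x * q ^ m) q (n + 1) = (1 - x * q ^ m) * qPoch (x * q ^ (m + 1)) q n := by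
  rw [qPoch_succ', pow_succ, mul_assoc]

lemma qPoch_mul_self_ne_zero (ha : ∀ m : ℕ, 1 ≤ m → a * q ^ m ≠ 1) (n : ℕ) :
    qPoch (a * q) q n ≠ 0 := by
  refine prod_ne_zero_iff.2 fun j _ => sub_ne_zero.2 fun h => ha (j + 1) j.succ_pos ?_
  rw [pow_succ', ← mul_assoc, ← h]

lemma qPoch_pow_self_ne_zero (hq : ∀ m : ℕ, 1 ≤ m → q ^ m ≠ 1) {d : ℕ} (hd : 1 ≤ d) (n : ℕ) :
    qPoch (q ^ d) (q ^ d) n ≠ 0 := by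
  have hqd (m : ℕ) (hm : 1 ≤ m) : 1 * (q ^ d) ^ m ≠ 1 := by
    rw [one_mul, ← pow_mul]
    exact hq _ (Nat.mul_pos hd hm)
  simpa only [one_mul] using qPoch_mul_self_ne_zero hqd n

lemma qPoch_self_ne_zero (hq : ∀ m : ℕ, 1 ≤ m → q ^ m ≠ 1) (n : ℕ) : qPoch q q n ≠ 0 := by
  simpa only [pow_one] using qPoch_pow_self_ne_zero hq le_rfl n

end qPoch

/-- The hypothesis `hc` compares the coefficients of `α r`, in the indices `n = r + N` and
`k = r + ij.2`, so that no subtraction occurs. -/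
lemma IsBaileyPair.transform {a q b p : ℂ} {α β : ℕ → ℂ} (h : IsBaileyPair a q α β)
    {c : ℕ → ℕ → ℂ} {w : ℕ → ℂ}
    (hc : ∀ r N, ∑ ij ∈ antidiagonal N,
        c (r + N) (r + ij.2) / (qPoch q q ij.2 * qPoch (a * q) q (2 * r + ij.2)) =
      w r / (qPoch p p N * qPoch (b * p) p (2 * r + N))) :
    IsBaileyPair b p (fun r => w r * α r) (fun n => ∑ k ∈ range (n + 1), c n k * β k) := by
  intro n
  simp only [h _, mul_sum]
  simp only [range_eq_Ico]
  rw [← sum_Ico_Ico_comm]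
  refine sum_congr rfl fun r hr => ?_
  obtain ⟨N, rfl⟩ := Nat.exists_eq_add_of_le (Nat.lt_succ_iff.1 (mem_Ico.1 hr).2)
  have hcoeff := hc r N
  rw [← Nat.sum_antidiagonal_swap, Nat.sum_antidiagonal_eq_sum_range_succ_mk] at hcoeff
  rw [sum_Ico_eq_sum_range, show r + N + 1 - r = N + 1 by lia, Nat.add_sub_cancel_left,
    show r + N + r = 2 * r + N by lia, mul_comm (w r), mul_div_assoc, ← hcoeff, mul_sum]
  refine sum_congr rfl fun j _ => ?_
  rw [Nat.add_sub_cancel_left, show r + j + r = 2 * r + j by lia]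
  exact mul_div_left_comm _ _ _

lemma sum_antidiagonal_succ_of_pascal {M : Type*} [AddCommMonoid M] {f u v : ℕ → ℕ → M}
    (h_left : ∀ n, f (n + 1) 0 = u n 0) (h_right : ∀ n, f 0 (n + 1) = v 0 n)
    (h_mid : ∀ i j, f (i + 1) (j + 1) = u i (j + 1) + v (i + 1) j) (n : ℕ) :
    ∑ ij ∈ antidiagonal (n + 1), f ij.1 ij.2 =
      ∑ ij ∈ antidiagonal n, (u ij.1 ij.2 + v ij.1 ij.2) := by
  cases n with
  | zero => simp [Nat.antidiagonal_succ, h_left, h_right, add_comm]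
  | succ n =>
    rw [sum_add_distrib, Nat.sum_antidiagonal_succ, Nat.sum_antidiagonal_succ',
      Nat.sum_antidiagonal_succ' (f := fun ij => u ij.1 ij.2),
      Nat.sum_antidiagonal_succ (f := fun ij => v ij.1 ij.2)]
    simp only [h_left, h_right, h_mid, sum_add_distrib]
    abel

/-- The summand of the cubic summation `sum_cubicTerm`, written in the indices `i = N - j` and `j`
so that no subtraction occurs. -/
noncomputable def cubicTerm (A q : ℂ) (i j : ℕ) : ℂ :=
  qPoch (A * q ^ (j + 1)) q (3 * i + j) * A ^ j * q ^ (j ^ 2) /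
    (qPoch (q ^ 3) (q ^ 3) i * qPoch q q j)

/-- The common part of the three terms of the Pascal-type rule `cubicTerm_succ_succ`: it is
`cubicTerm A q i (j + 1)` without the first factor of its numerator. -/
noncomputable def cubicCore (A q : ℂ) (i j : ℕ) : ℂ :=
  qPoch (A * q ^ (j + 3)) q (3 * i + j) * A ^ (j + 1) * q ^ ((j + 1) ^ 2) /
    (qPoch (q ^ 3) (q ^ 3) i * qPoch q q (j + 1))

/-- The coefficient with which `cubicTerm (A * q ^ 2) q i j` enters the multiple
`(1 - q ^ (3 * (i + 1 + j))) * cubicTerm A q (i + 1) j` in the Pascal-type rule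
`cubicTerm_succ_succ`. -/
noncomputable def cubicWeight (A q : ℂ) (i j : ℕ) : ℂ :=
  (1 - A * q) * (1 - A * q ^ (j + 2)) * (1 - A * q ^ (3 * i + 2 * j + 3))

section CubicSum

variable {q : ℂ}

lemma cubicTerm_succ_right (A q : ℂ) (i j : ℕ) :
    cubicTerm A q i (j + 1) = (1 - A * q ^ (j + 2)) * cubicCore A q i j := by
  rw [cubicTerm, cubicCore, ← add_assoc, qPoch_mul_pow_succ]
  ring

lemma mul_cubicTerm_eq_cubicCore (A : ℂ) (hq : ∀ m : ℕ, 1 ≤ m → q ^ m ≠ 1) (i j : ℕ) :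
    A * q * cubicTerm (A * q ^ 2) q i j = (1 - q ^ (j + 1)) * cubicCore A q i j := by
  have hj : 1 - q ^ (j + 1) ≠ 0 := sub_ne_zero.2 (hq _ j.succ_pos).symm
  rw [cubicTerm, cubicCore, qPoch_succ q q j, ← pow_succ',
    show A * q ^ 2 * q ^ (j + 1) = A * q ^ (j + 3) by ring]
  field_simp
  ring

lemma cubicWeight_mul_qPoch (A q : ℂ) (i j : ℕ) :
    cubicWeight A q i j * qPoch (A * q ^ (j + 3)) q (3 * i + j) =
      (1 - A * q) * qPoch (A * q ^ (j + 2)) q (3 * i + j + 2) := by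
  rw [cubicWeight, qPoch_mul_pow_succ A q (j + 2), qPoch_succ]
  ring

lemma cubicWeight_mul_cubicTerm_zero (A : ℂ) (hq : ∀ m : ℕ, 1 ≤ m → q ^ m ≠ 1) (n : ℕ) :
    cubicWeight A q n 0 * cubicTerm (A * q ^ 2) q n 0 =
      (1 - q ^ (3 * (n + 1))) * cubicTerm A q (n + 1) 0 := by
  have hn : 1 - q ^ (3 * (n + 1)) ≠ 0 := sub_ne_zero.2 (hq _ (by lia)).symm
  have hweight := cubicWeight_mul_qPoch A q n 0
  have hfirst := qPoch_mul_pow_succ A q 1 (3 * n + 2)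
  rw [cubicTerm, cubicTerm, qPoch_succ (q ^ 3) (q ^ 3) n, ← pow_succ', ← pow_mul,
    show A * q ^ 2 * q ^ (0 + 1) = A * q ^ (0 + 3) by ring,
    show 3 * (n + 1) + 0 = 3 * n + 2 + 1 by lia, hfirst]
  simp only [add_zero, zero_add, pow_zero, mul_one, pow_one] at hweight ⊢
  rw [← mul_div_assoc, ← mul_assoc, hweight]
  field_simp

lemma cubicWeight_mul_cubicTerm_succ (A : ℂ) (hq : ∀ m : ℕ, 1 ≤ m → q ^ m ≠ 1) (i j : ℕ) :
    cubicWeight A q i (j + 1) * cubicTerm (A * q ^ 2) q i (j + 1) =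
      (1 - A * q) * q ^ (2 * j + 2) * (1 - q ^ (3 * (i + 1))) * cubicCore A q (i + 1) j := by
  have hi : 1 - q ^ (3 * (i + 1)) ≠ 0 := sub_ne_zero.2 (hq _ (by lia)).symm
  have hweight := cubicWeight_mul_qPoch A q i (j + 1)
  rw [cubicTerm, cubicCore, qPoch_succ (q ^ 3) (q ^ 3) i, ← pow_succ', ← pow_mul,
    show A * q ^ 2 * q ^ (j + 1 + 1) = A * q ^ (j + 1 + 3) by ring,
    show 3 * (i + 1) + j = 3 * i + (j + 1) + 2 by lia, mul_assoc (qPoch _ _ _), ← mul_div_assoc,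
    ← mul_assoc, hweight]
  field_simp
  ring

/-- The factor `A q` is split off because `mul_cubicTerm_eq_cubicCore` absorbs it. -/
lemma one_sub_sub_cubicWeight (A q : ℂ) (i j : ℕ) :
    1 - A ^ 3 * q ^ (3 * (i + j) + 6) - cubicWeight A q i j =
      ((1 - A * q) * (q ^ (j + 1) + q ^ (3 * i + 2 * j + 2)) + (1 - A * q ^ (3 * (i + j) + 4))) *
        (A * q) := by
  rw [cubicWeight]
  ring

lemma cubicTerm_zero_succ (A : ℂ) (hq : ∀ m : ℕ, 1 ≤ m → q ^ m ≠ 1) (n : ℕ) :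
    (1 - q ^ (3 * (n + 1))) * cubicTerm A q 0 (n + 1) =
      (1 - A ^ 3 * q ^ (3 * n + 6) - cubicWeight A q 0 n) *
        cubicTerm (A * q ^ 2) q 0 n := by
  have hcoeff := one_sub_sub_cubicWeight A q 0 n
  rw [zero_add] at hcoeff
  rw [cubicTerm_succ_right, hcoeff, mul_assoc _ (A * q), mul_cubicTerm_eq_cubicCore A hq]
  ring

lemma cubicTerm_succ_succ (A : ℂ) (hq : ∀ m : ℕ, 1 ≤ m → q ^ m ≠ 1) (i j : ℕ) :
    (1 - q ^ (3 * (i + 1 + (j + 1)))) * cubicTerm A q (i + 1) (j + 1) =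
      cubicWeight A q i (j + 1) * cubicTerm (A * q ^ 2) q i (j + 1) +
        (1 - A ^ 3 * q ^ (3 * (i + 1 + j) + 6) - cubicWeight A q (i + 1) j) *
          cubicTerm (A * q ^ 2) q (i + 1) j := by
  rw [cubicTerm_succ_right, cubicWeight_mul_cubicTerm_succ A hq, one_sub_sub_cubicWeight,
    mul_assoc _ (A * q), mul_cubicTerm_eq_cubicCore A hq]
  ring

lemma sum_cubicTerm_succ (A : ℂ) (hq : ∀ m : ℕ, 1 ≤ m → q ^ m ≠ 1) (N : ℕ) :
    (1 - q ^ (3 * (N + 1))) * ∑ ij ∈ antidiagonal (N + 1), cubicTerm A q ij.1 ij.2 =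
      (1 - A ^ 3 * q ^ (3 * N + 6)) *
        ∑ ij ∈ antidiagonal N, cubicTerm (A * q ^ 2) q ij.1 ij.2 := by
  have hpascal := sum_antidiagonal_succ_of_pascal
    (f := fun i j => (1 - q ^ (3 * (i + j))) * cubicTerm A q i j)
    (u := fun i j => cubicWeight A q i j * cubicTerm (A * q ^ 2) q i j)
    (v := fun i j => (1 - A ^ 3 * q ^ (3 * (i + j) + 6) - cubicWeight A q i j) *
      cubicTerm (A * q ^ 2) q i j)
    (fun n => (cubicWeight_mul_cubicTerm_zero A hq n).symm)
    (fun n => by simpa only [zero_add] using cubicTerm_zero_succ A hq n)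
    (cubicTerm_succ_succ A hq) N
  simp only [← add_mul, add_sub_cancel] at hpascal
  rw [mul_sum, mul_sum]
  convert hpascal using 2 with ij hij ij hij <;> rw [mem_antidiagonal.1 hij]

theorem sum_cubicTerm (A : ℂ) (hq : ∀ m : ℕ, 1 ≤ m → q ^ m ≠ 1) (N : ℕ) :
    ∑ ij ∈ antidiagonal N, cubicTerm A q ij.1 ij.2 =
      qPoch (A ^ 3 * q ^ (3 * N + 3)) (q ^ 3) N / qPoch (q ^ 3) (q ^ 3) N := by
  induction N generalizing A with
  | zero => simp [cubicTerm]
  | succ N ih =>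
    have hN : 1 - q ^ (3 * (N + 1)) ≠ 0 := sub_ne_zero.2 (hq _ (by lia)).symm
    rw [← mul_right_inj' hN, sum_cubicTerm_succ A hq, ih, qPoch_succ', qPoch_succ (q ^ 3),
      ← pow_succ', ← pow_mul,
      show (A * q ^ 2) ^ 3 * q ^ (3 * N + 3) = A ^ 3 * q ^ (3 * (N + 1) + 3) * q ^ 3 by ring]
    field_simp
    ring

end CubicSum

/-- The coefficient of `β k` in the `n`-th member of the base-changed sequence. -/
noncomputable def cubicKernel (a q : ℂ) (n k : ℕ) : ℂ :=
  1 / qPoch (a ^ 3 * q ^ 3) (q ^ 3) (2 * n) *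
    (qPoch (a * q) q (3 * n - k) * a ^ k * q ^ (k ^ 2) / qPoch (q ^ 3) (q ^ 3) (n - k))

section CubicKernel

variable {a q : ℂ}

lemma cubicKernel_div_eq_cubicTerm (r i j : ℕ) (ha : qPoch (a * q) q (2 * r + j) ≠ 0) :
    cubicKernel a q (r + (i + j)) (r + j) / (qPoch q q j * qPoch (a * q) q (2 * r + j)) =
      a ^ r * q ^ (r ^ 2) / qPoch (a ^ 3 * q ^ 3) (q ^ 3) (2 * (r + (i + j))) *
        cubicTerm (a * q ^ (2 * r)) q i j := by
  rw [cubicKernel, cubicTerm,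
    show 3 * (r + (i + j)) - (r + j) = (2 * r + j) + (3 * i + j) by lia,
    show r + (i + j) - (r + j) = i by lia, qPoch_add,
    show a * q * q ^ (2 * r + j) = a * q ^ (2 * r) * q ^ (j + 1) by ring]
  field_simp
  ring

lemma sum_cubicKernel (hq : ∀ m : ℕ, 1 ≤ m → q ^ m ≠ 1) (ha : ∀ m : ℕ, 1 ≤ m → a * q ^ m ≠ 1)
    (ha3 : ∀ m : ℕ, 1 ≤ m → a ^ 3 * q ^ (3 * m) ≠ 1) (r N : ℕ) :
    ∑ ij ∈ antidiagonal N, cubicKernel a q (r + N) (r + ij.2) /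
        (qPoch q q ij.2 * qPoch (a * q) q (2 * r + ij.2)) =
      a ^ r * q ^ (r ^ 2) /
        (qPoch (q ^ 3) (q ^ 3) N * qPoch (a ^ 3 * q ^ 3) (q ^ 3) (2 * r + N)) := by
  have hsplit : qPoch (a ^ 3 * q ^ 3) (q ^ 3) (2 * (r + N)) =
      qPoch (a ^ 3 * q ^ 3) (q ^ 3) (2 * r + N) *
        qPoch ((a * q ^ (2 * r)) ^ 3 * q ^ (3 * N + 3)) (q ^ 3) N := by
    rw [show 2 * (r + N) = 2 * r + N + N by lia, qPoch_add,
      show a ^ 3 * q ^ 3 * (q ^ 3) ^ (2 * r + N) = (a * q ^ (2 * r)) ^ 3 * q ^ (3 * N + 3) by ring]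
  have hne : qPoch (a ^ 3 * q ^ 3) (q ^ 3) (2 * (r + N)) ≠ 0 :=
    qPoch_mul_self_ne_zero (fun m hm => by simpa only [← pow_mul] using ha3 m hm) _
  calc
    _ = ∑ ij ∈ antidiagonal N,
          a ^ r * q ^ (r ^ 2) / qPoch (a ^ 3 * q ^ 3) (q ^ 3) (2 * (r + N)) *
            cubicTerm (a * q ^ (2 * r)) q ij.1 ij.2 := by
      refine sum_congr rfl fun ij hij => ?_
      rw [← mem_antidiagonal.1 hij]
      exact cubicKernel_div_eq_cubicTerm r _ _ (qPoch_mul_self_ne_zero ha _)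
    _ = _ := by
      rw [← mul_sum, sum_cubicTerm _ hq]
      rw [hsplit] at hne ⊢
      rw [div_mul_div_comm, mul_right_comm (qPoch _ _ _),
        mul_div_mul_right _ _ (right_ne_zero_of_mul hne), mul_comm (qPoch _ _ (2 * r + N))]

end CubicKernel

/-- Theorem 2.3: base change from `(a, q)` to `(a³, q³)`. -/
theorem bailey_base_change_thm23 (q a : ℂ)
    (hq1 : ∀ m : ℕ, 1 ≤ m → q ^ m ≠ 1)
    (ha1 : ∀ m : ℕ, 1 ≤ m → a * q ^ m ≠ 1)
    (ha3 : ∀ m : ℕ, 1 ≤ m → a ^ 3 * q ^ (3 * m) ≠ 1)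
    (α β : ℕ → ℂ)
    (hpair : IsBaileyPair a q α β) :
    IsBaileyPair (a ^ 3) (q ^ 3)
      (fun r => a ^ r * q ^ (r ^ 2) * α r)
      (fun n => (1 / qPoch (a ^ 3 * q ^ 3) (q ^ 3) (2 * n)) *
        ∑ k ∈ Finset.range (n + 1),
          qPoch (a * q) q (3 * n - k) * a ^ k * q ^ (k ^ 2) / qPoch (q ^ 3) (q ^ 3) (n - k) *
            β k) := by
  simpa only [cubicKernel, mul_assoc, ← mul_sum] using
    hpair.transform (sum_cubicKernel hq1 ha1 ha3)
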